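/- Let L be an n-dimensional Lie algebra over a field F of nilpotency class 3 with dim [L,L] = 2. Then L is capable if and only if L is isomorphic to the direct sum of L_{4,3} and an (n−4)-dimensional abelian Lie algebra, or to the direct sum of L_{5,5} and an (n−5)-dimensional abelian Lie algebra. -/

import Mathlib

open Module

universe u

/-- A witness to the capability of a Lie algebra `L` over `F`: a Lie algebra `E`
together with an isomorphism `L ≃ E ⧸ Z(E)`. -/
structure CapableWitness (F : Type u) (L : Type u) [Field F] [LieRing L] [LieAlgebra F L] where
  carrier : Type u
  [lieRing : LieRing carrier]
  [lieAlgebra : LieAlgebra F carrier]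
  equiv : L ≃ₗ⁅F⁆ (carrier ⧸ LieAlgebra.center F carrier)

/-- A Lie algebra `L` over a field `F` is capable if there exists a Lie algebra `E` over `F`
with `L ≅ E ⧸ Z(E)`. -/
def IsCapable (F : Type u) (L : Type u) [Field F] [LieRing L] [LieAlgebra F L] : Prop :=
  Nonempty (CapableWitness F L)

/-- `L` is isomorphic to `L_{4,3} ⊕ A(n-4)` (dimension `n`). -/
def IsL43SumAbelian (F : Type u) (L : Type u) [Field F] [LieRing L] [LieAlgebra F L]
    (n : ℕ) : Prop :=
  ∃ (hn : 4 ≤ n) (b : Basis (Fin n) F L),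
    ⁅b ⟨0, by omega⟩, b ⟨1, by omega⟩⁆ = b ⟨2, by omega⟩ ∧
    ⁅b ⟨0, by omega⟩, b ⟨2, by omega⟩⁆ = b ⟨3, by omega⟩ ∧
    ∀ i j : Fin n, i < j → (i, j) ≠ (⟨0, by omega⟩, ⟨1, by omega⟩) →
      (i, j) ≠ (⟨0, by omega⟩, ⟨2, by omega⟩) →
      ⁅b i, b j⁆ = 0

/-- `L` is isomorphic to `L_{5,5} ⊕ A(n-5)` (dimension `n`). -/
def IsL55SumAbelian (F : Type u) (L : Type u) [Field F] [LieRing L] [LieAlgebra F L]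
    (n : ℕ) : Prop :=
  ∃ (hn : 5 ≤ n) (b : Basis (Fin n) F L),
    ⁅b ⟨0, by omega⟩, b ⟨1, by omega⟩⁆ = b ⟨2, by omega⟩ ∧
    ⁅b ⟨0, by omega⟩, b ⟨2, by omega⟩⁆ = b ⟨4, by omega⟩ ∧
    ⁅b ⟨1, by omega⟩, b ⟨3, by omega⟩⁆ = b ⟨4, by omega⟩ ∧
    ∀ i j : Fin n, i < j → (i, j) ≠ (⟨0, by omega⟩, ⟨1, by omega⟩) →
      (i, j) ≠ (⟨0, by omega⟩, ⟨2, by omega⟩) →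
      (i, j) ≠ (⟨1, by omega⟩, ⟨3, by omega⟩) →
      ⁅b i, b j⁆ = 0

/-!
`L` is capable iff it is the image of a surjection whose kernel is the centre of the source.

The Jacobi identity and the class assumption give functionals `λ`, `μ`, `ν` and vectors `a`, `w`,
`z` with `⁅x, y⁆ = (λ ∧ μ)(x, y) w + γ(x, y) z`, where `γ` is an alternating form.
If `L` is capable, the common kernel of `λ`, `μ`, `ν` is abelian: its elements `k` commute with `a`
and `w`, where `⁅a, w⁆ = z`, so their lifts to the covering algebra commute with a lift of `z`; as
moreover `⁅L, k⁆ ⊆ F z`, the bracket of two such lifts is central by the Jacobi identity. Therefore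
`γ = λ ∧ ν + μ ∧ β` for some functional `β`, which vanishes for `L_{4,3}` and is a further
coordinate for `L_{5,5}`.

Conversely, `λ(x) y - λ(y) x + (ν ∧ β)(x, y) z` is a 2-cocycle whose radical meets the centre of `L`
trivially, so the central extension it defines has centre exactly the kernel of its map to `L`.
-/

section Biorthogonal

/-- The functionals `φ` and the vectors `v` are dual to each other: `φ i (v j) = δ_{ij}`. The
vectors need not span. -/
def Biorthogonal {ι R V : Type*} [DecidableEq ι] [CommRing R] [AddCommGroup V] [Module R V]
    (φ : ι → Dual R V) (v : ι → V) : Prop :=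
  ∀ i j, φ i (v j) = if i = j then 1 else 0

variable {ι κ F R V : Type*} [DecidableEq ι] [Field F] [CommRing R] [AddCommGroup V]

theorem exists_biorthogonal_of_linearIndependent [Module F V] {v : ι → V}
    (hv : LinearIndependent F v) : ∃ φ : ι → Dual F V, Biorthogonal φ v := by
  obtain ⟨T, hT⟩ := LinearMap.exists_leftInverse_of_injective
    (Finsupp.linearCombination F v) (LinearMap.ker_eq_bot.2 hv)
  have hTv (j : ι) : T (v j) = Finsupp.single j 1 := by
    simpa using LinearMap.congr_fun hT (Finsupp.single j 1)
  exact ⟨fun i ↦ Finsupp.lapply i ∘ₗ T, fun i j ↦ by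
    simp [hTv, Finsupp.single_apply, eq_comm]⟩

theorem biorthogonal_coord_comp [Module R V] (b : Basis κ R V) {e : ι → κ}
    (he : Function.Injective e) : Biorthogonal (b.coord ∘ e) (b ∘ e) := fun i j ↦ by
  classical
  simp [Finsupp.single_apply, he.eq_iff, eq_comm]

namespace Biorthogonal

variable [Module F V] {φ : ι → Dual F V} {v : ι → V}

theorem apply_sub_sum_eq_zero [Fintype ι] (h : Biorthogonal φ v) (x : V) (i : ι) :
    φ i (x - ∑ j, φ j x • v j) = 0 := by
  simp [h _ _]

theorem exists_apply_eq_one [Finite ι] (h : Biorthogonal φ v) {β : Dual F V}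
    (hβv : ∀ i, β (v i) = 0) (hβ : β ≠ 0) : ∃ k, β k = 1 ∧ ∀ i, φ i k = 0 := by
  cases nonempty_fintype ι
  obtain ⟨x, hx⟩ : ∃ x, β x = 1 := LinearMap.surjective hβ 1
  exact ⟨x - ∑ j, φ j x • v j, by simp [hβv, hx], h.apply_sub_sum_eq_zero x⟩

/-- A biorthogonal system splits the space into the span of `v`, with coordinates `φ`, and the
common kernel of `φ`. -/
def equivProdKer [Fintype ι] (h : Biorthogonal φ v) :
    V ≃ₗ[F] (ι → F) × LinearMap.ker (LinearMap.pi φ) :=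
  LinearEquiv.symm
  { toFun := fun p ↦ ∑ i, p.1 i • v i + p.2
    map_add' := fun p q ↦ by
      simp only [Prod.fst_add, Prod.snd_add, Pi.add_apply, add_smul, Finset.sum_add_distrib,
        Submodule.coe_add]
      abel
    map_smul' := fun c p ↦ by simp [Finset.smul_sum, mul_smul]
    invFun := fun x ↦ (fun i ↦ φ i x, ⟨x - ∑ i, φ i x • v i, funext (h.apply_sub_sum_eq_zero x)⟩)
    left_inv := by
      rintro ⟨a, y, hy⟩
      have hφy (i : ι) : φ i y = 0 := congrFun hy i
      ext <;> simp [h _ _, hφy]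
    right_inv := fun x ↦ by simp }

theorem exists_basis_extension [FiniteDimensional F V] {n k : ℕ} (hn : finrank F V = n)
    {φ : Fin k → Dual F V} {v : Fin k → V} (h : Biorthogonal φ v) :
    ∃ (hk : k ≤ n) (b : Basis (Fin n) F V),
      ∀ i, b (Fin.castLE hk i) = v i ∧ b.coord (Fin.castLE hk i) = φ i := by
  have hdim : k + finrank F (LinearMap.ker (LinearMap.pi φ)) = n := by
    rw [← hn, h.equivProdKer.finrank_eq, finrank_prod, finrank_fin_fun]
  let b := (((Pi.basisFun F (Fin k)).prod (finBasis F (LinearMap.ker (LinearMap.pi φ)))).map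
    h.equivProdKer.symm).reindex (finSumFinEquiv.trans (finCongr hdim))
  have hk : k ≤ n := by omega
  have hindex (i : Fin k) :
      (finSumFinEquiv.trans (finCongr hdim)).symm (Fin.castLE hk i) = Sum.inl i := by
    rw [Equiv.symm_apply_eq]
    rfl
  refine ⟨hk, b, fun i ↦ ⟨?_, ?_⟩⟩
  · rw [Basis.reindex_apply, hindex]
    simp [equivProdKer, Pi.single_apply]
  · ext x
    rw [Basis.coord_apply, Basis.repr_reindex_apply, hindex]
    simp [equivProdKer]

end Biorthogonal

end Biorthogonal

section Wedge

variable {ι R V W L : Type*} [CommRing R] [AddCommGroup V] [Module R V] [AddCommGroup W]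
  [Module R W]

/-- The exterior product of two linear functionals, as a bilinear form. -/
def wedge (f g : Dual R V) : V →ₗ[R] V →ₗ[R] R :=
  f.smulRight g - g.smulRight f

@[simp]
theorem wedge_apply (f g : Dual R V) (x y : V) : wedge f g x y = f x * g y - g x * f y := rfl

theorem wedge_coord_apply_of_lt [LinearOrder ι] (b : Basis ι R V) {i j p q : ι} (hij : i < j)
    (hpq : p < q) :
    wedge (b.coord p) (b.coord q) (b i) (b j) = if (i, j) = (p, q) then 1 else 0 := by
  have hswap : ¬(i = q ∧ j = p) := by
    rintro ⟨rfl, rfl⟩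
    exact lt_asymm hij hpq
  simp only [wedge_apply, Basis.coord_apply, Basis.repr_self, Finsupp.single_apply, Prod.mk.injEq]
  split_ifs <;> simp_all

theorem ext_of_isAlt_of_basis [LinearOrder ι] {B C : V →ₗ[R] V →ₗ[R] W} (hB : B.IsAlt)
    (hC : C.IsAlt) (b : Basis ι R V) (h : ∀ i j, i < j → B (b i) (b j) = C (b i) (b j)) :
    B = C := by
  refine b.ext fun i ↦ b.ext fun j ↦ ?_
  rcases lt_trichotomy i j with hij | rfl | hij
  · exact h i j hij
  · rw [hB.self_eq_zero, hC.self_eq_zero]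
  · rw [← hB.neg, ← hC.neg, h j i hij]

theorem forall_lie_eq_iff_basis [LieRing L] [LieAlgebra R L] [LinearOrder ι]
    (b : Basis ι R L) {B : L →ₗ[R] L →ₗ[R] L} (hB : B.IsAlt) :
    (∀ x y, ⁅x, y⁆ = B x y) ↔ ∀ i j, i < j → ⁅b i, b j⁆ = B (b i) (b j) := by
  refine ⟨fun h i j _ ↦ h _ _, fun h x y ↦ ?_⟩
  have : (LieAlgebra.ad R L : L →ₗ[R] L →ₗ[R] L) = B := ext_of_isAlt_of_basis lie_self hB b h
  exact LinearMap.congr_fun₂ this x y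

/-- The alternating bilinear map `(λ ∧ μ) w + (λ ∧ ν + μ ∧ β) z`, which is the Lie bracket of a
capable algebra in suitable coordinates. -/
def normalBracket (lam μ ν β : Dual R V) (w z : V) : V →ₗ[R] V →ₗ[R] V :=
  (wedge lam μ).compr₂ (LinearMap.toSpanSingleton R V w) +
    (wedge lam ν + wedge μ β).compr₂ (LinearMap.toSpanSingleton R V z)

theorem normalBracket_apply (lam μ ν β : Dual R V) (w z x y : V) :
    normalBracket lam μ ν β w z x y =
      wedge lam μ x y • w + (wedge lam ν x y + wedge μ β x y) • z := rfl

theorem isAlt_normalBracket (lam μ ν β : Dual R V) (w z : V) :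
    (normalBracket lam μ ν β w z).IsAlt := fun x ↦ by
  simp [normalBracket_apply, mul_comm]

end Wedge

section Capable

variable {F L : Type u} [Field F] [LieRing L] [LieAlgebra F L]

theorem isCapable_iff_exists_surjective : IsCapable F L ↔
    ∃ (E : Type u) (_ : LieRing E) (_ : LieAlgebra F E) (p : E →ₗ⁅F⁆ L),
      Function.Surjective p ∧ p.ker = LieAlgebra.center F E := by
  constructor
  · rintro ⟨E, e⟩
    let q : E →ₗ⁅F⁆ (E ⧸ LieAlgebra.center F E) :=
      { (LieSubmodule.Quotient.mk' (LieAlgebra.center F E) : E →ₗ[F] _) with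
        map_lie' := fun {x y} ↦ LieSubmodule.Quotient.mk_bracket _ x y }
    refine ⟨E, inferInstance, inferInstance, e.symm.toLieHom.comp q, ?_, ?_⟩
    · exact e.symm.surjective.comp (LieSubmodule.Quotient.surjective_mk' _)
    · ext x
      rw [LieHom.mem_ker, LieHom.comp_apply, ← LieSubmodule.Quotient.mk_eq_zero]
      exact map_eq_zero_iff e.symm e.symm.injective
  · rintro ⟨E, _, _, p, hp, hker⟩
    have e : (E ⧸ p.ker) ≃ₗ⁅F⁆ L := p.quotKerEquivRange.trans
      ((LieEquiv.ofEq _ _ (congrArg _ (p.range_eq_top.2 hp))).trans LieSubalgebra.topEquiv)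
    rw [hker] at e
    exact ⟨⟨E, e.symm⟩⟩

open LieModule.Cohomology in
theorem isCapable_of_twoCocycle {M : Type u} [AddCommGroup M] [Module F M] [LieRingModule L M]
    [LieModule F L M] [LieModule.IsTrivial L M] (c : twoCocycle F L M)
    (hc : ∀ x : L, (∀ y : L, ⁅y, x⁆ = 0) → (∀ y, c.1 y x = 0) → x = 0) : IsCapable F L := by
  let ext := LieAlgebra.ofTwoCocycle c
  let p : ext →ₗ⁅F⁆ L :=
    { toFun := fun e ↦ e.carrier.1
      map_add' := fun _ _ ↦ rfl
      map_smul' := fun _ _ ↦ rfl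
      map_lie' := rfl }
  have lie_eq (e e' : ext) :
      ⁅e, e'⁆ = ⟨⁅e.carrier.1, e'.carrier.1⁆, c.1 e.carrier.1 e'.carrier.1⟩ := by
    rw [LieAlgebra.bracket_ofTwoCocycle, trivial_lie_zero L M, trivial_lie_zero L M, sub_zero,
      add_zero]
    rfl
  refine isCapable_iff_exists_surjective.2 ⟨ext, _, _, p, fun x ↦ ⟨⟨(x, 0)⟩, rfl⟩, ?_⟩
  ext e
  rw [LieHom.mem_ker, LieModule.mem_maxTrivSubmodule]
  constructor
  · intro (he : e.carrier.1 = 0) e'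
    rw [lie_eq, he, lie_zero, map_zero]
    rfl
  · intro he
    refine hc _ (fun y ↦ ?_) fun y ↦ ?_
    · exact congrArg (·.carrier.1) ((lie_eq ⟨(y, 0)⟩ e).symm.trans (he _))
    · exact congrArg (·.carrier.2) ((lie_eq ⟨(y, 0)⟩ e).symm.trans (he _))

/- Lifts of `k₁` and `k₂` commute with any lift of `⁅a, b⁆`, by the Jacobi identity; the same
identity then shows that their bracket is central. -/
theorem IsCapable.lie_eq_zero (h : IsCapable F L) {a b k₁ k₂ : L}
    (ha₁ : ⁅k₁, a⁆ = 0) (hb₁ : ⁅k₁, b⁆ = 0) (ha₂ : ⁅k₂, a⁆ = 0) (hb₂ : ⁅k₂, b⁆ = 0)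
    (hk₁ : ∀ y : L, ⁅y, k₁⁆ ∈ Submodule.span F {⁅a, b⁆})
    (hk₂ : ∀ y : L, ⁅y, k₂⁆ ∈ Submodule.span F {⁅a, b⁆}) : ⁅k₁, k₂⁆ = 0 := by
  obtain ⟨E, _, _, p, hp, hker⟩ := isCapable_iff_exists_surjective.1 h
  have lie_of_ker {e : E} (he : p e = 0) (y : E) : ⁅y, e⁆ = 0 := by
    rw [← LieHom.mem_ker, hker, LieModule.mem_maxTrivSubmodule] at he
    exact he y
  have ker_lie {e : E} (he : p e = 0) (y : E) : ⁅e, y⁆ = 0 := by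
    rw [← lie_skew, lie_of_ker he, neg_zero]
  obtain ⟨A, rfl⟩ := hp a
  obtain ⟨B, rfl⟩ := hp b
  obtain ⟨K₁, rfl⟩ := hp k₁
  obtain ⟨K₂, rfl⟩ := hp k₂
  have lie_lie_eq_zero {K : E} (ha : ⁅p K, p A⁆ = 0) (hb : ⁅p K, p B⁆ = 0) :
      ⁅K, ⁅A, B⁆⁆ = 0 := by
    rw [leibniz_lie, ker_lie (by rwa [p.map_lie]), lie_of_ker (by rwa [p.map_lie]), add_zero]
  have lie_lie_eq_zero' {K K' : E} (hK : ⁅K', ⁅A, B⁆⁆ = 0) (y : E)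
      (hy : ⁅p y, p K⁆ ∈ Submodule.span F {⁅p A, p B⁆}) : ⁅K', ⁅y, K⁆⁆ = 0 := by
    obtain ⟨t, ht⟩ := Submodule.mem_span_singleton.1 hy
    have := lie_of_ker (e := ⁅y, K⁆ - t • ⁅A, B⁆) (by simp [ht]) K'
    rwa [lie_sub, lie_smul, hK, smul_zero, sub_zero] at this
  have hcenter : ⁅K₁, K₂⁆ ∈ LieAlgebra.center F E := fun y ↦ by
    rw [leibniz_lie, ← lie_skew, lie_lie_eq_zero' (lie_lie_eq_zero ha₂ hb₂) y (hk₁ _),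
      lie_lie_eq_zero' (lie_lie_eq_zero ha₁ hb₁) y (hk₂ _), neg_zero, add_zero]
  rwa [← hker, LieHom.mem_ker, p.map_lie] at hcenter

end Capable

section NormalFrame

variable {F L : Type u} [Field F] [LieRing L] [LieAlgebra F L]

/-- A biorthogonal system in which the bracket takes the form `normalBracket`. The functional
`β` is kept apart since it may vanish, which is what distinguishes `L_{4,3}` from `L_{5,5}`. -/
structure IsNormalFrame (φ : Fin 4 → Dual F L) (β : Dual F L) (v : Fin 4 → L) : Prop where
  biorthogonal : Biorthogonal φ v
  apply_eq_zero : ∀ i, β (v i) = 0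
  lie_eq : ∀ x y, ⁅x, y⁆ = normalBracket (φ 0) (φ 1) (φ 2) β (v 2) (v 3) x y

open LieModule.Cohomology in
theorem IsNormalFrame.isCapable {φ : Fin 4 → Dual F L} {β : Dual F L} {v : Fin 4 → L}
    (h : IsNormalFrame φ β v) : IsCapable F L := by
  let M := TrivialLieModule F L L
  let toM : L ≃ₗ[F] M := (TrivialLieModule.equiv F L L).symm
  -- The first two terms detect every central vector; the last one makes `ω` closed.
  let ω : L →ₗ[F] L →ₗ[F] L :=
    LinearMap.smulRight (φ 0) LinearMap.id - LinearMap.smulRightₗ (φ 0) +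
      (wedge (φ 2) β).compr₂ (LinearMap.toSpanSingleton F L (v 3))
  have ω_apply (x y : L) : ω x y = φ 0 x • y - φ 0 y • x + wedge (φ 2) β x y • v 3 := rfl
  have hcochain : ω.compr₂ toM.toLinearMap ∈ twoCochain F L M := fun x ↦ by
    simp [ω_apply, mul_comm]
  have φ₀_lie (x y : L) : φ 0 ⁅x, y⁆ = 0 := by
    simp [h.lie_eq, normalBracket_apply, h.biorthogonal _ _]
  have φ₂_lie (x y : L) : φ 2 ⁅x, y⁆ = wedge (φ 0) (φ 1) x y := by
    simp [h.lie_eq, normalBracket_apply, h.biorthogonal _ _]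
  have β_lie (x y : L) : β ⁅x, y⁆ = 0 := by
    simp [h.lie_eq, normalBracket_apply, h.apply_eq_zero]
  have hcocycle : (⟨_, hcochain⟩ : twoCochain F L M) ∈ twoCocycle F L M := by
    rw [mem_twoCocycle_iff_of_trivial]
    intro x y t
    change toM (ω _ _) = toM (ω _ _) + toM (ω _ _)
    rw [← map_add]
    congr 1
    simp only [ω_apply, wedge_apply, φ₀_lie, φ₂_lie, β_lie]
    simp only [h.lie_eq, normalBracket_apply, wedge_apply]
    module
  refine isCapable_of_twoCocycle ⟨_, hcocycle⟩ fun x hx hωx ↦ ?_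
  have hv : v 3 ≠ 0 := fun hv ↦ by simpa [hv] using h.biorthogonal 3 3
  have h0 : φ 0 x = 0 := by
    simpa [h.lie_eq, normalBracket_apply, h.biorthogonal _ _, h.apply_eq_zero, hv] using hx (v 2)
  have hβ : β x = 0 := by
    simpa [h.lie_eq, normalBracket_apply, h.biorthogonal _ _, h.apply_eq_zero, hv, h0]
      using hx (v 1)
  have hω : ω (v 0) x = 0 := hωx (v 0)
  simpa [ω_apply, h.biorthogonal _ _, h.apply_eq_zero, h0, hβ] using hω

theorem isL43SumAbelian_iff {n : ℕ} : IsL43SumAbelian F L n ↔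
    ∃ (hn : 4 ≤ n) (b : Basis (Fin n) F L), ∀ x y, ⁅x, y⁆ =
      normalBracket (b.coord ⟨0, by omega⟩) (b.coord ⟨1, by omega⟩) (b.coord ⟨2, by omega⟩) 0
        (b ⟨2, by omega⟩) (b ⟨3, by omega⟩) x y := by
  refine exists_congr fun hn ↦ exists_congr fun b ↦ ?_
  rw [forall_lie_eq_iff_basis b (isAlt_normalBracket _ _ _ _ _ _)]
  have normalBracket_basis {i j : Fin n} (hij : i < j) :
      normalBracket (b.coord ⟨0, by omega⟩) (b.coord ⟨1, by omega⟩) (b.coord ⟨2, by omega⟩) 0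
        (b ⟨2, by omega⟩) (b ⟨3, by omega⟩) (b i) (b j) =
      (if (i, j) = (⟨0, by omega⟩, ⟨1, by omega⟩) then 1 else 0 : F) • b ⟨2, by omega⟩ +
      (if (i, j) = (⟨0, by omega⟩, ⟨2, by omega⟩) then 1 else 0 : F) • b ⟨3, by omega⟩ := by
    rw [normalBracket_apply, wedge_coord_apply_of_lt b hij (by simp),
      wedge_coord_apply_of_lt b hij (by simp)]
    simp
  constructor
  · rintro ⟨h01, h02, h⟩ i j hij
    rw [normalBracket_basis hij]
    by_cases e01 : (i, j) = (⟨0, by omega⟩, ⟨1, by omega⟩)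
    · obtain ⟨hi, hj⟩ := Prod.mk.inj e01
      simp [hi, hj, h01]
    by_cases e02 : (i, j) = (⟨0, by omega⟩, ⟨2, by omega⟩)
    · obtain ⟨hi, hj⟩ := Prod.mk.inj e02
      simp [hi, hj, h02]
    simp only [h i j hij e01 e02, e01, e02, if_false, zero_smul, add_zero]
  · intro h
    have lie_basis {i j : Fin n} (hij : i < j) := (h i j hij).trans (normalBracket_basis hij)
    refine ⟨?_, ?_, fun i j hij h01 h02 ↦ ?_⟩
    · simp [lie_basis]
    · simp [lie_basis]
    · simp [lie_basis hij, h01, h02]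

theorem isL55SumAbelian_iff {n : ℕ} : IsL55SumAbelian F L n ↔
    ∃ (hn : 5 ≤ n) (b : Basis (Fin n) F L), ∀ x y, ⁅x, y⁆ =
      normalBracket (b.coord ⟨0, by omega⟩) (b.coord ⟨1, by omega⟩) (b.coord ⟨2, by omega⟩)
        (b.coord ⟨3, by omega⟩) (b ⟨2, by omega⟩) (b ⟨4, by omega⟩) x y := by
  refine exists_congr fun hn ↦ exists_congr fun b ↦ ?_
  rw [forall_lie_eq_iff_basis b (isAlt_normalBracket _ _ _ _ _ _)]
  have normalBracket_basis {i j : Fin n} (hij : i < j) :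
      normalBracket (b.coord ⟨0, by omega⟩) (b.coord ⟨1, by omega⟩) (b.coord ⟨2, by omega⟩)
        (b.coord ⟨3, by omega⟩) (b ⟨2, by omega⟩) (b ⟨4, by omega⟩) (b i) (b j) =
      (if (i, j) = (⟨0, by omega⟩, ⟨1, by omega⟩) then 1 else 0 : F) • b ⟨2, by omega⟩ +
      ((if (i, j) = (⟨0, by omega⟩, ⟨2, by omega⟩) then 1 else 0 : F) +
        (if (i, j) = (⟨1, by omega⟩, ⟨3, by omega⟩) then 1 else 0 : F)) • b ⟨4, by omega⟩ := by
    rw [normalBracket_apply, wedge_coord_apply_of_lt b hij (by simp),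
      wedge_coord_apply_of_lt b hij (by simp), wedge_coord_apply_of_lt b hij (by simp)]
  constructor
  · rintro ⟨h01, h02, h13, h⟩ i j hij
    rw [normalBracket_basis hij]
    by_cases e01 : (i, j) = (⟨0, by omega⟩, ⟨1, by omega⟩)
    · obtain ⟨hi, hj⟩ := Prod.mk.inj e01
      simp [hi, hj, h01]
    by_cases e02 : (i, j) = (⟨0, by omega⟩, ⟨2, by omega⟩)
    · obtain ⟨hi, hj⟩ := Prod.mk.inj e02
      simp [hi, hj, h02]
    by_cases e13 : (i, j) = (⟨1, by omega⟩, ⟨3, by omega⟩)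
    · obtain ⟨hi, hj⟩ := Prod.mk.inj e13
      simp [hi, hj, h13]
    simp only [h i j hij e01 e02 e13, e01, e02, e13, if_false, zero_smul, add_zero]
  · intro h
    have lie_basis {i j : Fin n} (hij : i < j) := (h i j hij).trans (normalBracket_basis hij)
    refine ⟨?_, ?_, ?_, fun i j hij h01 h02 h13 ↦ ?_⟩
    · simp [lie_basis]
    · simp [lie_basis]
    · simp [lie_basis]
    · simp [lie_basis hij, h01, h02, h13]

theorem IsL43SumAbelian.exists_isNormalFrame {n : ℕ} (h : IsL43SumAbelian F L n) :
    ∃ φ v, IsNormalFrame (F := F) (L := L) φ 0 v := by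
  obtain ⟨hn, b, hb⟩ := isL43SumAbelian_iff.1 h
  exact ⟨_, _, biorthogonal_coord_comp b (Fin.castLE_injective hn), fun _ ↦ rfl, hb⟩

theorem IsL55SumAbelian.exists_isNormalFrame {n : ℕ} (h : IsL55SumAbelian F L n) :
    ∃ φ β v, IsNormalFrame (F := F) (L := L) φ β v := by
  obtain ⟨hn, b, hb⟩ := isL55SumAbelian_iff.1 h
  let e : Fin 4 → Fin n := Fin.castLE hn ∘ Fin.succAbove 3
  have he : Function.Injective e :=
    (Fin.castLE_injective hn).comp Fin.succAbove_right_injective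
  refine ⟨_, b.coord ⟨3, by omega⟩, _, biorthogonal_coord_comp b he, fun i ↦ ?_, hb⟩
  have hi : e i ≠ ⟨3, by omega⟩ := (Fin.castLE_injective hn).ne (Fin.succAbove_ne 3 i)
  simp [hi]

namespace IsNormalFrame

variable [FiniteDimensional F L] {n : ℕ} {φ : Fin 4 → Dual F L} {β : Dual F L} {v : Fin 4 → L}

theorem isL43SumAbelian (hn : finrank F L = n) (h : IsNormalFrame φ 0 v) :
    IsL43SumAbelian F L n := by
  obtain ⟨hk, b, hb⟩ := h.biorthogonal.exists_basis_extension hn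
  refine isL43SumAbelian_iff.2 ⟨hk, b, fun x y ↦ ?_⟩
  rw [h.lie_eq, ← (hb 0).2, ← (hb 1).2, ← (hb 2).2, ← (hb 2).1, ← (hb 3).1]
  rfl

theorem isL55SumAbelian (hn : finrank F L = n) (h : IsNormalFrame φ β v) (hβ : β ≠ 0) :
    IsL55SumAbelian F L n := by
  obtain ⟨k, hβk, hφk⟩ := h.biorthogonal.exists_apply_eq_one h.apply_eq_zero hβ
  have hext : Biorthogonal ![φ 0, φ 1, φ 2, β, φ 3] ![v 0, v 1, v 2, k, v 3] := fun i j ↦ by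
    fin_cases i <;> fin_cases j <;> simp [h.biorthogonal _ _, h.apply_eq_zero, hβk, hφk]
  obtain ⟨hk, b, hb⟩ := hext.exists_basis_extension hn
  refine isL55SumAbelian_iff.2 ⟨hk, b, fun x y ↦ ?_⟩
  change _ = normalBracket (b.coord (Fin.castLE hk 0)) (b.coord (Fin.castLE hk 1))
    (b.coord (Fin.castLE hk 2)) (b.coord (Fin.castLE hk 3)) (b (Fin.castLE hk 2))
    (b (Fin.castLE hk 4)) x y
  rw [(hb 0).2, (hb 1).2, (hb 2).2, (hb 3).2, (hb 2).1, (hb 4).1]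
  exact h.lie_eq x y

end IsNormalFrame

end NormalFrame

section LowerCentralSeries

open LieModule

variable {R L M : Type*} [CommRing R] [LieRing L] [LieAlgebra R L] [AddCommGroup M] [Module R M]
  [LieRingModule L M]

theorem lie_mem_lowerCentralSeries_succ {k : ℕ} (x : L) {m : M}
    (hm : m ∈ lowerCentralSeries R L M k) : ⁅x, m⁆ ∈ lowerCentralSeries R L M (k + 1) := by
  rw [lowerCentralSeries_succ]
  exact LieSubmodule.lie_mem_lie (LieSubmodule.mem_top x) hm

theorem lie_mem_lowerCentralSeries_one (x : L) (m : M) : ⁅x, m⁆ ∈ lowerCentralSeries R L M 1 :=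
  lie_mem_lowerCentralSeries_succ x (LieSubmodule.mem_top m)

theorem lowerCentralSeries_succ_le_iff {k : ℕ} {N : LieSubmodule R L M} :
    lowerCentralSeries R L M (k + 1) ≤ N ↔
      ∀ x : L, ∀ m ∈ lowerCentralSeries R L M k, ⁅x, m⁆ ∈ N := by
  rw [lowerCentralSeries_succ, LieSubmodule.lie_le_iff]
  simp only [LieSubmodule.mem_top, forall_const]

theorem lie_lie_lie_eq_zero (h3 : lowerCentralSeries R L M 3 = ⊥) (x y t : L) (m : M) :
    ⁅x, ⁅y, ⁅t, m⁆⁆⁆ = 0 := by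
  rw [← LieSubmodule.mem_bot (R := R) (L := L), ← h3]
  exact lie_mem_lowerCentralSeries_succ x
    (lie_mem_lowerCentralSeries_succ y (lie_mem_lowerCentralSeries_one t m))

theorem exists_lie_lie_ne_zero [LieModule R L M] (h2 : lowerCentralSeries R L M 2 ≠ ⊥) :
    ∃ (x y : L) (m : M), ⁅x, ⁅y, m⁆⁆ ≠ 0 := by
  by_contra! h
  have hle : lowerCentralSeries R L M 1 ≤ maxTrivSubmodule R L M :=
    lowerCentralSeries_succ_le_iff.2 fun y m _ x ↦ h x y m
  refine h2 (eq_bot_iff.2 (lowerCentralSeries_succ_le_iff.2 fun x m hm ↦ ?_))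
  exact (LieSubmodule.mem_bot _).2 (hle hm x)

end LowerCentralSeries

section ClassThree

variable {F L : Type*} [Field F] [LieRing L] [LieAlgebra F L]

open LieModule

theorem linearIndependent_pair_lie {a w : L} (haw : ⁅a, w⁆ ≠ 0) (haaw : ⁅a, ⁅a, w⁆⁆ = 0) :
    LinearIndependent F ![w, ⁅a, w⁆] := by
  rw [LinearIndependent.pair_iff]
  intro s t hst
  have hs : s = 0 := by simpa [haaw, haw] using congrArg (⁅a, ·⁆) hst
  subst hs
  simpa [haw] using hst

theorem exists_lie_eq_smul_add_smul (h3 : lowerCentralSeries F L L 3 = ⊥)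
    (hder : finrank F (lowerCentralSeries F L L 1) = 2) {a b c : L} (h : ⁅a, ⁅b, c⁆⁆ ≠ 0)
    (x y : L) : ∃ s t : F, ⁅x, y⁆ = s • ⁅b, c⁆ + t • ⁅a, ⁅b, c⁆⁆ := by
  have hli : LinearIndependent F ![⁅b, c⁆, ⁅a, ⁅b, c⁆⁆] :=
    linearIndependent_pair_lie h (lie_lie_lie_eq_zero h3 a a b c)
  have hle : Submodule.span F (Set.range ![⁅b, c⁆, ⁅a, ⁅b, c⁆⁆]) ≤
      (lowerCentralSeries F L L 1).toSubmodule := by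
    rw [Submodule.span_le, Set.range_subset_iff, Fin.forall_fin_two]
    exact ⟨lie_mem_lowerCentralSeries_one b c, lie_mem_lowerCentralSeries_one a _⟩
  have : FiniteDimensional F (lowerCentralSeries F L L 1).toSubmodule :=
    finite_of_finrank_eq_succ hder
  have hspan := Submodule.eq_of_le_of_finrank_eq hle ((finrank_span_eq_card hli).trans hder.symm)
  have hxy : ⁅x, y⁆ ∈ (lowerCentralSeries F L L 1).toSubmodule :=
    lie_mem_lowerCentralSeries_one x y
  rw [← hspan, Matrix.range_cons_cons_empty, Submodule.mem_span_pair] at hxy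
  obtain ⟨s, t, hst⟩ := hxy
  exact ⟨s, t, hst.symm⟩

theorem exists_lie_eq_smul_of_lie_lie_ne_zero (h3 : lowerCentralSeries F L L 3 = ⊥)
    (hder : finrank F (lowerCentralSeries F L L 1) = 2) {a b c : L} (h : ⁅a, ⁅b, c⁆⁆ ≠ 0)
    (x : L) : ∃ t : F, ⁅x, ⁅b, c⁆⁆ = t • ⁅a, ⁅b, c⁆⁆ := by
  obtain ⟨s, t, hst⟩ := exists_lie_eq_smul_add_smul h3 hder h x ⁅b, c⁆
  have hs : s = 0 := by
    simpa [lie_lie_lie_eq_zero h3, h] using congrArg (⁅a, ·⁆) hst.symm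
  exact ⟨t, by simpa [hs] using hst⟩

theorem exists_lie_lie_self_ne_zero (h2 : lowerCentralSeries F L L 2 ≠ ⊥)
    (h3 : lowerCentralSeries F L L 3 = ⊥)
    (hder : finrank F (lowerCentralSeries F L L 1) = 2) : ∃ x y : L, ⁅x, ⁅x, y⁆⁆ ≠ 0 := by
  obtain ⟨a, b, c, habc⟩ := exists_lie_lie_ne_zero h2
  by_contra! h
  have hc : ⁅c, ⁅b, c⁆⁆ = 0 := by rw [← lie_skew b c, lie_neg, h, neg_zero]
  have lie_lie_eq_zero {d : L} (hd : ⁅d, ⁅b, c⁆⁆ = 0) (x y : L) : ⁅d, ⁅x, y⁆⁆ = 0 := by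
    obtain ⟨s, t, hst⟩ := exists_lie_eq_smul_add_smul h3 hder habc x y
    rw [hst, lie_add, lie_smul, lie_smul, hd, lie_lie_lie_eq_zero h3, smul_zero, smul_zero,
      add_zero]
  refine habc ?_
  rw [leibniz_lie, ← lie_skew, lie_lie_eq_zero hc, lie_lie_eq_zero (h b c), neg_zero, add_zero]

theorem exists_lie_lie_ne_zero_and_lie_lie_eq_zero (h2 : lowerCentralSeries F L L 2 ≠ ⊥)
    (h3 : lowerCentralSeries F L L 3 = ⊥)
    (hder : finrank F (lowerCentralSeries F L L 1) = 2) :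
    ∃ x y : L, ⁅x, ⁅x, y⁆⁆ ≠ 0 ∧ ⁅y, ⁅x, y⁆⁆ = 0 := by
  obtain ⟨x, y, hxy⟩ := exists_lie_lie_self_ne_zero h2 h3 hder
  obtain ⟨t, ht⟩ := exists_lie_eq_smul_of_lie_lie_ne_zero h3 hder hxy y
  have hlie : ⁅x, y - t • x⁆ = ⁅x, y⁆ := by simp
  exact ⟨x, y - t • x, by rwa [hlie], by rw [hlie, sub_lie, smul_lie, ht, sub_self]⟩

/-- A biorthogonal system adapted to the lower central series of a Lie algebra of class 3 with
two-dimensional derived subalgebra: `v 2 = ⁅v 0, v 1⁆` and `v 3 = ⁅v 0, v 2⁆` span the derived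
subalgebra, and `v 3` spans the last term. The functionals `φ 0`, `φ 1`, `φ 2` are the `λ`, `μ`, `ν`
of `normalBracket`, and `φ 3` reads off the coefficient of `v 3` in a bracket. -/
structure IsAdaptedFrame (φ : Fin 4 → Dual F L) (v : Fin 4 → L) : Prop where
  biorthogonal : Biorthogonal φ v
  lie_eq : ∀ x y : L, ⁅x, y⁆ = wedge (φ 0) (φ 1) x y • v 2 + φ 3 ⁅x, y⁆ • v 3
  lie_two : ∀ x : L, ⁅x, v 2⁆ = φ 0 x • v 3
  lie_three : ∀ x : L, ⁅x, v 3⁆ = 0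
  apply_two : ∀ x : L, φ 2 x = φ 3 ⁅v 0, x⁆

theorem apply_lie_eq_wedge {f g lam : Dual F L} {a w z : L} (hz : z ≠ 0) (hlam : lam a = 1)
    (lie_eq : ∀ x y : L, ⁅x, y⁆ = f ⁅x, y⁆ • w + g ⁅x, y⁆ • z)
    (lie_w : ∀ x, ⁅x, w⁆ = lam x • z) (lie_z : ∀ x : L, ⁅x, z⁆ = 0) (x y : L) :
    f ⁅x, y⁆ = wedge lam (f ∘ₗ LieAlgebra.ad F L a) x y := by
  have lie_lie (t x y : L) : ⁅t, ⁅x, y⁆⁆ = (f ⁅x, y⁆ * lam t) • z := by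
    rw [lie_eq x y, lie_add, lie_smul, lie_smul, lie_w, lie_z, smul_zero, add_zero, smul_smul,
      ← lie_eq]
  have jacobi := leibniz_lie a x y
  rw [← lie_skew ⁅a, x⁆ y, lie_lie, lie_lie, lie_lie, ← neg_smul, ← add_smul] at jacobi
  simpa [hlam, neg_add_eq_sub, mul_comm] using smul_left_injective F hz jacobi

theorem linearIndependent_lie_lie {a b : L} (hz : ⁅a, ⁅a, b⁆⁆ ≠ 0) (hb : ⁅b, ⁅a, b⁆⁆ = 0)
    (lie_z : ∀ x : L, ⁅x, ⁅a, ⁅a, b⁆⁆⁆ = 0) :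
    LinearIndependent F ![a, b, ⁅a, b⁆, ⁅a, ⁅a, b⁆⁆] := by
  have lie_w_a : ⁅⁅a, b⁆, a⁆ = -⁅a, ⁅a, b⁆⁆ := (lie_skew _ _).symm
  have lie_w_b : ⁅⁅a, b⁆, b⁆ = 0 := by rw [← lie_skew, hb, neg_zero]
  rw [Fintype.linearIndependent_iff]
  intro c hc
  simp only [Fin.sum_univ_four, Matrix.cons_val] at hc
  have h0 : c 0 = 0 := by
    simpa [-lie_skew, lie_w_a, lie_w_b, lie_z, hz] using congrArg (⁅⁅a, b⁆, ·⁆) hc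
  have h1 : c 1 = 0 := by
    simpa [lie_z, h0, hz] using congrArg (⁅a, ⁅a, ·⁆⁆) hc
  have h2 : c 2 = 0 := by
    simpa [lie_z, h1, hz] using congrArg (⁅a, ·⁆) hc
  have h3 : c 3 = 0 := by
    simpa [h0, h1, h2, hz] using hc
  exact Fin.forall_fin_succ.2 ⟨h0, Fin.forall_fin_succ.2 ⟨h1, Fin.forall_fin_two.2 ⟨h2, h3⟩⟩⟩

theorem exists_isAdaptedFrame (h2 : lowerCentralSeries F L L 2 ≠ ⊥)
    (h3 : lowerCentralSeries F L L 3 = ⊥)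
    (hder : finrank F (lowerCentralSeries F L L 1) = 2) :
    ∃ φ v, IsAdaptedFrame (F := F) (L := L) φ v := by
  obtain ⟨a, b, hz, hb⟩ := exists_lie_lie_ne_zero_and_lie_lie_eq_zero h2 h3 hder
  have lie_z (x : L) : ⁅x, ⁅a, ⁅a, b⁆⁆⁆ = 0 := lie_lie_lie_eq_zero h3 x a a b
  obtain ⟨ψ, hψ⟩ := exists_biorthogonal_of_linearIndependent
    (linearIndependent_lie_lie (F := F) hz hb lie_z)
  set w := ⁅a, b⁆ with hw
  set z := ⁅a, w⁆ with hz_def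
  have hψw : ψ 2 w = 1 ∧ ψ 3 w = 0 := ⟨hψ 2 2, hψ 3 2⟩
  have hψz : ψ 2 z = 0 ∧ ψ 3 z = 1 := ⟨hψ 2 3, hψ 3 3⟩
  have hψab : ψ 3 a = 0 ∧ ψ 3 b = 0 := ⟨hψ 3 0, hψ 3 1⟩
  have lie_eq (x y : L) : ⁅x, y⁆ = ψ 2 ⁅x, y⁆ • w + ψ 3 ⁅x, y⁆ • z := by
    obtain ⟨s, t, hst⟩ : ∃ s t : F, ⁅x, y⁆ = s • w + t • z :=
      exists_lie_eq_smul_add_smul h3 hder hz x y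
    simp [hst, hψw, hψz]
  have z_lie (x : L) : ⁅z, x⁆ = 0 := by rw [← lie_skew, lie_z, neg_zero]
  let lam : Dual F L := -(ψ 3 ∘ₗ LieAlgebra.ad F L w)
  let μ : Dual F L := ψ 2 ∘ₗ LieAlgebra.ad F L a
  let ν : Dual F L := ψ 3 ∘ₗ LieAlgebra.ad F L a
  have lam_apply (x : L) : lam x = ψ 3 ⁅x, w⁆ := by
    rw [← lie_skew x w, map_neg]
    rfl
  have μ_apply (x : L) : μ x = ψ 2 ⁅a, x⁆ := rfl
  have ν_apply (x : L) : ν x = ψ 3 ⁅a, x⁆ := rfl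
  have lie_w (x : L) : ⁅x, w⁆ = lam x • z := by
    obtain ⟨t, ht⟩ := exists_lie_eq_smul_of_lie_lie_ne_zero h3 hder hz x
    rw [lam_apply, ht, map_smul, hψz.2, smul_eq_mul, mul_one]
  have hlam : lam a = 1 := by rw [lam_apply, hψz.2]
  refine ⟨![lam, μ, ν, ψ 3], ![a, b, w, z], fun i j ↦ ?_, fun x y ↦ ?_, lie_w, lie_z,
    ν_apply⟩
  · fin_cases i <;> fin_cases j <;>
      simp [lam_apply, μ_apply, ν_apply, hψab, hψw, hψz, hb, z_lie, lie_z, ← hw, ← hz_def]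
  · exact (lie_eq x y).trans
      (congrArg (· • w + _) (apply_lie_eq_wedge hz hlam lie_eq lie_w lie_z x y))

end ClassThree

namespace IsAdaptedFrame

variable {F L : Type u} [Field F] [LieRing L] [LieAlgebra F L] {φ : Fin 4 → Dual F L}
  {v : Fin 4 → L}

theorem lie_eq_zero_of_isCapable (h : IsAdaptedFrame φ v) (hcap : IsCapable F L) {k₁ k₂ : L}
    (hk₁ : φ 0 k₁ = 0 ∧ φ 1 k₁ = 0 ∧ φ 2 k₁ = 0) (hk₂ : φ 0 k₂ = 0 ∧ φ 1 k₂ = 0 ∧ φ 2 k₂ = 0) :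
    ⁅k₁, k₂⁆ = 0 := by
  have lie_zero_eq_zero {k : L} (hk : φ 0 k = 0 ∧ φ 1 k = 0 ∧ φ 2 k = 0) : ⁅k, v 0⁆ = 0 := by
    rw [← lie_skew, h.lie_eq, ← h.apply_two, wedge_apply]
    simp [hk]
  have lie_two_eq_zero {k : L} (hk : φ 0 k = 0 ∧ φ 1 k = 0 ∧ φ 2 k = 0) : ⁅k, v 2⁆ = 0 := by
    rw [h.lie_two, hk.1, zero_smul]
  have lie_mem_span {k : L} (hk : φ 0 k = 0 ∧ φ 1 k = 0 ∧ φ 2 k = 0) (y : L) :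
      ⁅y, k⁆ ∈ Submodule.span F {⁅v 0, v 2⁆} := by
    refine Submodule.mem_span_singleton.2 ⟨φ 3 ⁅y, k⁆, ?_⟩
    conv_rhs => rw [h.lie_eq]
    simp [h.lie_two, h.biorthogonal _ _, hk]
  exact hcap.lie_eq_zero (lie_zero_eq_zero hk₁) (lie_two_eq_zero hk₁) (lie_zero_eq_zero hk₂)
    (lie_two_eq_zero hk₂) (lie_mem_span hk₁) (lie_mem_span hk₂)

theorem isNormalFrame (h : IsAdaptedFrame φ v) (hcap : IsCapable F L) :
    IsNormalFrame φ (φ 3 ∘ₗ LieAlgebra.ad F L (v 1)) v := by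
  -- `φ 3 ⁅x, y⁆` is determined by the values of `φ 3 ⁅v i, x⁆`, since `φ 3 ⁅k x, k y⁆ = 0`.
  have γ_zero_left (x : L) : φ 3 ⁅v 0, x⁆ = φ 2 x := (h.apply_two x).symm
  have γ_zero_right (x : L) : φ 3 ⁅x, v 0⁆ = -φ 2 x := by
    rw [← lie_skew, map_neg, γ_zero_left]
  have γ_two_right (x : L) : φ 3 ⁅x, v 2⁆ = φ 0 x := by
    simp [h.lie_two, h.biorthogonal _ _]
  have γ_two_left (x : L) : φ 3 ⁅v 2, x⁆ = -φ 0 x := by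
    rw [← lie_skew, map_neg, γ_two_right]
  have γ_one_right (x : L) : φ 3 ⁅x, v 1⁆ = -φ 3 ⁅v 1, x⁆ := by
    rw [← lie_skew, map_neg]
  let k (x : L) : L := x - φ 0 x • v 0 - φ 1 x • v 1 - φ 2 x • v 2
  have hk (x : L) : φ 0 (k x) = 0 ∧ φ 1 (k x) = 0 ∧ φ 2 (k x) = 0 := by
    simp [k, h.biorthogonal _ _]
  refine ⟨h.biorthogonal, fun i ↦ ?_, fun x y ↦ ?_⟩
  · fin_cases i <;>
      simp [γ_zero_right, γ_two_right, h.lie_three, h.biorthogonal _ _]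
  · have hγ : φ 3 ⁅k x, k y⁆ = 0 := by
      rw [h.lie_eq_zero_of_isCapable hcap (hk x) (hk y), map_zero]
    have γ_eq : φ 3 ⁅x, y⁆ = wedge (φ 0) (φ 2) x y +
        wedge (φ 1) (φ 3 ∘ₗ LieAlgebra.ad F L (v 1)) x y := by
      simp only [k, lie_sub, sub_lie, smul_lie, lie_smul, lie_self, map_sub, map_smul, map_zero,
        smul_eq_mul, γ_zero_left, γ_zero_right, γ_one_right, γ_two_left, γ_two_right,
        h.biorthogonal _ _, Fin.reduceEq, ↓reduceIte] at hγ
      simp only [wedge_apply, LinearMap.coe_comp, Function.comp_apply, LieAlgebra.ad_apply]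
      linear_combination hγ
    conv_lhs => rw [h.lie_eq, γ_eq]
    rfl

end IsAdaptedFrame

/-- An `n`-dimensional Lie algebra of class 3 with 2-dimensional derived subalgebra is
capable iff it is isomorphic to `L_{4,3} ⊕ A(n-4)` or `L_{5,5} ⊕ A(n-5)`. -/
theorem class_three_capable_iff_iso
    (F L : Type u) [Field F] [LieRing L] [LieAlgebra F L] [FiniteDimensional F L]
    (n : ℕ) (hdim : finrank F L = n)
    (hclass : LieModule.lowerCentralSeries F L L 2 ≠ ⊥ ∧ LieModule.lowerCentralSeries F L L 3 = ⊥)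
    (hder : finrank F ↥(LieModule.lowerCentralSeries F L L 1) = 2) :
    IsCapable F L ↔ IsL43SumAbelian F L n ∨ IsL55SumAbelian F L n := by
  constructor
  · intro hcap
    obtain ⟨φ, v, hframe⟩ := exists_isAdaptedFrame hclass.1 hclass.2 hder
    have hnormal := hframe.isNormalFrame hcap
    by_cases hβ : φ 3 ∘ₗ LieAlgebra.ad F L (v 1) = 0
    · exact .inl ((hβ ▸ hnormal).isL43SumAbelian hdim)
    · exact .inr (hnormal.isL55SumAbelian hdim hβ)
  · rintro (h43 | h55)
    · obtain ⟨φ, v, hnormal⟩ := h43.exists_isNormalFrame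
      exact hnormal.isCapable
    · obtain ⟨φ, β, v, hnormal⟩ := h55.exists_isNormalFrame
      exact hnormal.isCapable
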